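/- Let M : ℝ² → ℝ be continuous and bounded. Suppose that for all continuous compactly supported f₁, f₂ : ℝ² → ℝ, ∫ M(Δq,Δp) f₁(q,p) f₂(q+Δq, p+Δp) dq dp dΔq dΔp = ∫ M(Δq,Δp) f₂(q,p) f₁(q+Δq, p+Δp) dq dp dΔq dΔp. Then M(Δq, Δp) = M(−Δq, −Δp) for all (Δq, Δp). -/

import Mathlib

open MeasureTheory

/-!
The shear-reflection `(x, d) ↦ (x + d, -d)` preserves Lebesgue measure and turns the integrand
`M d * f₂ x * f₁ (x + d)` into `M (-d) * f₁ x * f₂ (x + d)`. Symmetry of the form therefore says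
that `∫ (M d - M (-d)) * f₁ x * f₂ (x + d) = 0` for all test functions. If the odd function
`d ↦ M d - M (-d)` were positive at some `d₀`, it would be positive near `d₀` by continuity, and
taking for `f₁`, `f₂` small tent functions centred at `0` and `d₀` would make the integrand
continuous, compactly supported, nonnegative and nonzero, so that the integral would be positive.
Hence `M d ≤ M (-d)` for every `d`, and applying this to `-d` gives equality.
-/

/-- The tent function of height and radius `ε` centred at `c`. -/
noncomputable def tent (ε : ℝ) (c z : ℝ × ℝ) : ℝ := max 0 (ε - dist z c)

lemma tent_nonneg (ε : ℝ) (c z : ℝ × ℝ) : 0 ≤ tent ε c z := le_max_left _ _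

lemma continuous_tent (ε : ℝ) (c : ℝ × ℝ) : Continuous (tent ε c) := by
  unfold tent
  fun_prop

lemma dist_lt_of_tent_ne_zero {ε : ℝ} {c z : ℝ × ℝ} (h : tent ε c z ≠ 0) : dist z c < ε := by
  by_contra hz
  exact h (max_eq_left (by linarith))

lemma hasCompactSupport_tent (ε : ℝ) (c : ℝ × ℝ) : HasCompactSupport (tent ε c) :=
  HasCompactSupport.of_support_subset_isCompact (isCompact_closedBall c ε)
    fun _ hz => Metric.mem_closedBall.2 (dist_lt_of_tent_ne_zero hz).le

lemma tent_self {ε : ℝ} (hε : 0 < ε) (c : ℝ × ℝ) : tent ε c c = ε := by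
  simp [tent, hε.le]

lemma continuous_integrand {N f g : ℝ × ℝ → ℝ} (hN : Continuous N) (hf : Continuous f)
    (hg : Continuous g) :
    Continuous fun w : (ℝ × ℝ) × (ℝ × ℝ) => N w.2 * f w.1 * g (w.1 + w.2) := by
  fun_prop

lemma hasCompactSupport_integrand (N : ℝ × ℝ → ℝ) {f g : ℝ × ℝ → ℝ}
    (hf : HasCompactSupport f) (hg : HasCompactSupport g) :
    HasCompactSupport fun w : (ℝ × ℝ) × (ℝ × ℝ) => N w.2 * f w.1 * g (w.1 + w.2) := by
  -- The support lies in the image of `tsupport f ×ˢ tsupport g` under `(x, y) ↦ (x, y - x)`.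
  refine HasCompactSupport.of_support_subset_isCompact
    ((hf.isCompact.prod hg.isCompact).image
      (f := fun p : (ℝ × ℝ) × (ℝ × ℝ) => (p.1, p.2 - p.1)) (by fun_prop)) ?_
  intro w hw
  have hw' : N w.2 * f w.1 * g (w.1 + w.2) ≠ 0 := hw
  refine ⟨(w.1, w.1 + w.2), ⟨subset_tsupport _ ?_, subset_tsupport _ ?_⟩, by simp⟩
  · exact right_ne_zero_of_mul (left_ne_zero_of_mul hw')
  · exact right_ne_zero_of_mul hw'

lemma measurePreserving_shear_neg :
    MeasurePreserving (fun w : (ℝ × ℝ) × (ℝ × ℝ) => (w.1 + w.2, -w.2)) volume volume :=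
  (measurePreserving_add_prod_neg (volume : Measure (ℝ × ℝ)) (volume : Measure (ℝ × ℝ))).comp
    Measure.measurePreserving_swap

lemma integral_swap_eq {M f g : ℝ × ℝ → ℝ} (hM : Continuous M) (hf : Continuous f)
    (hg : Continuous g) :
    ∫ w : (ℝ × ℝ) × (ℝ × ℝ), M w.2 * g w.1 * f (w.1 + w.2)
      = ∫ w : (ℝ × ℝ) × (ℝ × ℝ), M (-w.2) * f w.1 * g (w.1 + w.2) := by
  have hmp := measurePreserving_shear_neg
  rw [← hmp.map_eq, integral_map hmp.measurable.aemeasurable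
    (continuous_integrand hM hg hf).aestronglyMeasurable, hmp.map_eq]
  refine integral_congr_ae (.of_forall fun w => ?_)
  simp only [add_neg_cancel_right]
  ring

/-- One half of the evenness of `M`: testing with tents at `0` and `d₀` excludes
`M (-d₀) < M d₀`. -/
lemma kernel_le_neg {M : ℝ × ℝ → ℝ} (hM : Continuous M)
    (hsymm : ∀ f g : ℝ × ℝ → ℝ,
      Continuous f → HasCompactSupport f → Continuous g → HasCompactSupport g →
      ∫ w : (ℝ × ℝ) × (ℝ × ℝ), M w.2 * f w.1 * g (w.1 + w.2)
        = ∫ w : (ℝ × ℝ) × (ℝ × ℝ), M w.2 * g w.1 * f (w.1 + w.2))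
    (d₀ : ℝ × ℝ) : M d₀ ≤ M (-d₀) := by
  by_contra! hlt
  have hMn : Continuous fun d => M (-d) := by fun_prop
  have hA : Continuous fun d => M d - M (-d) := by fun_prop
  obtain ⟨δ, hδ, hpos⟩ := Metric.eventually_nhds_iff.1
    (hA.continuousAt.eventually (lt_mem_nhds (sub_pos.2 hlt)))
  -- If `x` is within `δ / 2` of `0` and `x + d` within `δ / 2` of `d₀`, then `d` is within `δ`
  -- of `d₀`.
  set f := tent (δ / 2) 0 with hf_def
  set g := tent (δ / 2) d₀ with hg_def
  have hf : Continuous f := continuous_tent _ _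
  have hg : Continuous g := continuous_tent _ _
  have hfc : HasCompactSupport f := hasCompactSupport_tent _ _
  have hgc : HasCompactSupport g := hasCompactSupport_tent _ _
  have hpos_int : 0 < ∫ w : (ℝ × ℝ) × (ℝ × ℝ), (M w.2 - M (-w.2)) * f w.1 * g (w.1 + w.2) := by
    refine (continuous_integrand hA hf hg).integral_pos_of_hasCompactSupport_nonneg_nonzero
      (hasCompactSupport_integrand (fun d => M d - M (-d)) hfc hgc) (fun w => ?_)
      (x := (0, d₀)) ?_
    · by_cases h1 : f w.1 = 0
      · simp [h1]
      by_cases h2 : g (w.1 + w.2) = 0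
      · simp [h2]
      have h1' := dist_lt_of_tent_ne_zero h1
      have h2' := dist_lt_of_tent_ne_zero h2
      have hd : dist w.2 d₀ < δ := by
        rw [dist_eq_norm] at h1' h2' ⊢
        calc ‖w.2 - d₀‖ = ‖(w.1 + w.2 - d₀) - (w.1 - 0)‖ := by congr 1; abel
          _ ≤ ‖w.1 + w.2 - d₀‖ + ‖w.1 - 0‖ := norm_sub_le _ _
          _ < δ := by linarith
      exact mul_nonneg (mul_nonneg (hpos hd).le (tent_nonneg _ _ _)) (tent_nonneg _ _ _)
    · have hδ2 : 0 < δ / 2 := by positivity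
      simp only [zero_add, hf_def, hg_def, tent_self hδ2]
      exact mul_ne_zero (mul_ne_zero (sub_pos.2 hlt).ne' hδ2.ne') hδ2.ne'
  have hi₁ := (continuous_integrand hM hf hg).integrable_of_hasCompactSupport (μ := volume)
    (hasCompactSupport_integrand M hfc hgc)
  have hi₂ := (continuous_integrand hMn hf hg).integrable_of_hasCompactSupport (μ := volume)
    (hasCompactSupport_integrand (fun d => M (-d)) hfc hgc)
  simp only [sub_mul] at hpos_int
  rw [integral_sub hi₁ hi₂, hsymm f g hf hfc hg hgc, integral_swap_eq hM hf hg, sub_self]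
    at hpos_int
  exact hpos_int.false

/-- Symmetry step of the paper's Theorem 1 (Generalised inner product): if the
translation-invariant bilinear form `∫ M(Δq,Δp) f₁(q,p) f₂(q+Δq,p+Δp)` is symmetric in
`f₁, f₂` for all test functions, then the kernel `M` is an even function of the
displacement. -/
theorem stmt_2 (M : ℝ × ℝ → ℝ)
    (hcont : Continuous M) (hbdd : ∃ C : ℝ, ∀ w, |M w| ≤ C)
    (hsymm : ∀ f₁ f₂ : ℝ × ℝ → ℝ,
      Continuous f₁ → HasCompactSupport f₁ → Continuous f₂ → HasCompactSupport f₂ →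
      (∫ w : (ℝ × ℝ) × (ℝ × ℝ),
          M w.2 * f₁ w.1 * f₂ (w.1.1 + w.2.1, w.1.2 + w.2.2))
        = ∫ w : (ℝ × ℝ) × (ℝ × ℝ),
            M w.2 * f₂ w.1 * f₁ (w.1.1 + w.2.1, w.1.2 + w.2.2)) :
    ∀ Δq Δp : ℝ, M (Δq, Δp) = M (-Δq, -Δp) := by
  intro Δq Δp
  refine le_antisymm (kernel_le_neg hcont hsymm (Δq, Δp)) ?_
  simpa using kernel_le_neg hcont hsymm (-Δq, -Δp)
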